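/- Let Y be a metric space, I ⊆ ℝ an interval and γ : I → Y an absolutely continuous curve. Then for almost every t ∈ I the limit |γ̇_t| := lim_{h→0} d(γ_{t+h}, γ_t)/|h| exists (the metric speed); the function t ↦ |γ̇_t| belongs to L¹(I), satisfies d(γ_s, γ_t) ≤ ∫_s^t |γ̇_r| dr for all s ≤ t in I, and is minimal in the almost-everywhere sense among all functions g ∈ L¹(I) with d(γ_s, γ_t) ≤ ∫_s^t g(r) dr for all s ≤ t in I. -/

import Mathlib

open Filter MeasureTheory Set Bornology
open scoped ENNReal Topology NNReal

/-- A (constant-speed, minimizing) geodesic defined on `[0,1]`: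
`d(γ_s, γ_t) = |s - t| * d(γ_0, γ_1)` for all `s, t ∈ [0,1]`. -/
def IsGeodesic {Y : Type*} [MetricSpace Y] (γ : ℝ → Y) : Prop :=
  ∀ s ∈ Set.Icc (0:ℝ) 1, ∀ t ∈ Set.Icc (0:ℝ) 1,
    dist (γ s) (γ t) = |s - t| * dist (γ 0) (γ 1)

/-- A metric space is geodesic if every two points are joined by a geodesic. -/
def GeodesicSpace (Y : Type*) [MetricSpace Y] : Prop :=
  ∀ x y : Y, ∃ γ : ℝ → Y, IsGeodesic γ ∧ γ 0 = x ∧ γ 1 = y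

/-- The CAT(0) condition: geodesic space satisfying the comparison inequality
`d²(γ_t, a) ≤ (1-t)·d²(γ_0, a) + t·d²(γ_1, a) − t(1-t)·d²(γ_0, γ_1)`.
(Completeness is required separately as a typeclass assumption.) -/
def Cat0 (Y : Type*) [MetricSpace Y] : Prop :=
  GeodesicSpace Y ∧
    ∀ γ : ℝ → Y, IsGeodesic γ → ∀ a : Y, ∀ t ∈ Set.Icc (0:ℝ) 1,
      dist (γ t) a ^ 2 ≤ (1 - t) * dist (γ 0) a ^ 2 + t * dist (γ 1) a ^ 2
        - t * (1 - t) * dist (γ 0) (γ 1) ^ 2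

/-- A subset is geodesically convex if every geodesic joining two of its points
lies entirely inside it. -/
def GeodesicConvex {Y : Type*} [MetricSpace Y] (C : Set Y) : Prop :=
  ∀ γ : ℝ → Y, IsGeodesic γ → γ 0 ∈ C → γ 1 ∈ C → ∀ t ∈ Set.Icc (0:ℝ) 1, γ t ∈ C

/-- `lam`-convexity along geodesics of an extended-real-valued functional:
`E(γ_t) ≤ (1-t)E(γ_0) + tE(γ_1) − (lam/2)t(1−t)d²(γ_0,γ_1)`. -/
def LamConvex {Y : Type*} [MetricSpace Y] (lam : ℝ) (E : Y → EReal) : Prop :=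
  ∀ γ : ℝ → Y, IsGeodesic γ → ∀ t ∈ Set.Icc (0:ℝ) 1,
    E (γ t) ≤ ((1 - t : ℝ) : EReal) * E (γ 0) + ((t : ℝ) : EReal) * E (γ 1)
      - ((lam / 2 * t * (1 - t) * dist (γ 0) (γ 1) ^ 2 : ℝ) : EReal)

/-- The descending slope `|∂⁻E|(y) = limsup_{z→y} (E(y)−E(z))⁺ / d(y,z)`,
set to `∞` outside the domain `{E < ∞}` of `E`. -/
noncomputable def descendingSlope {Y : Type*} [MetricSpace Y] (E : Y → EReal) (y : Y) :
    ℝ≥0∞ :=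
  if E y = ⊤ then ⊤
  else Filter.limsup (fun z => ENNReal.ofReal ((E y - E z).toReal / dist y z))
      (nhdsWithin y {y}ᶜ)

/-- `ω(y; (y_n)) := limsup_n d(y, y_n)²`. -/
noncomputable def asymptoticRadius {Y : Type*} [MetricSpace Y] (yn : ℕ → Y) (y : Y) : ℝ :=
  Filter.limsup (fun n => dist y (yn n) ^ 2) Filter.atTop

/-- Weak convergence of a bounded sequence: `y` is an asymptotic center
(i.e. a minimizer of `ω(·; ·)`) of every subsequence. -/
def WeakConv {Y : Type*} [MetricSpace Y] (yn : ℕ → Y) (y : Y) : Prop :=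
  Bornology.IsBounded (Set.range yn) ∧
    ∀ φ : ℕ → ℕ, StrictMono φ →
      ∀ z : Y, asymptoticRadius (yn ∘ φ) y ≤ asymptoticRadius (yn ∘ φ) z

/-- Absolute continuity on a set `I ⊆ ℝ`: there is a nonnegative integrable `g`
with `d(y_s, y_t) ≤ ∫_s^t g` for `s ≤ t` in `I`. -/
def AbsContOnSet {Y : Type*} [MetricSpace Y] (y : ℝ → Y) (I : Set ℝ) : Prop :=
  ∃ g : ℝ → ℝ, (∀ t, 0 ≤ g t) ∧ MeasureTheory.IntegrableOn g I ∧
    ∀ s ∈ I, ∀ t ∈ I, s ≤ t → dist (y s) (y t) ≤ ∫ r in s..t, g r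

/-- Absolute continuity on the interval `[a,b]`. -/
def AbsContOn {Y : Type*} [MetricSpace Y] (y : ℝ → Y) (a b : ℝ) : Prop :=
  AbsContOnSet y (Set.Icc a b)

/-- Local absolute continuity on `(0,∞)`. -/
def LocAbsCont {Y : Type*} [MetricSpace Y] (y : ℝ → Y) : Prop :=
  ∀ a b : ℝ, 0 < a → a ≤ b → AbsContOn y a b

/-- The Evolution Variational Inequality: for every `z`, for a.e. `t > 0` the
derivative of `t ↦ ½ d²(y_t, z)` exists and
`(d/dt)(½d²(y_t,z)) + E(y_t) + (lam/2)d²(y_t,z) ≤ E(z)`. -/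
def EVI {Y : Type*} [MetricSpace Y] (lam : ℝ) (E : Y → EReal) (y : ℝ → Y) : Prop :=
  ∀ z : Y, ∀ᵐ t ∂(MeasureTheory.volume.restrict (Set.Ioi (0:ℝ))),
    ∃ d' : ℝ, HasDerivAt (fun s => dist (y s) z ^ 2 / 2) d' t ∧
      (d' : EReal) + E (y t) + ((lam / 2 * dist (y t) z ^ 2 : ℝ) : EReal) ≤ E z

/-- A gradient flow trajectory for `E` starting from `y₀`: a locally absolutely
continuous curve on `(0,∞)` converging to `y₀` at `0` and satisfying the EVI. -/
def GradientFlow {Y : Type*} [MetricSpace Y] (lam : ℝ) (E : Y → EReal) (y₀ : Y)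
    (y : ℝ → Y) : Prop :=
  LocAbsCont y ∧ Filter.Tendsto y (nhdsWithin 0 (Set.Ioi 0)) (nhds y₀) ∧ EVI lam E y

/-!
Let `g` be integrable on `I` with `d(γ_s, γ_t) ≤ ∫_s^t g`. By Lebesgue's differentiation theorem the
difference quotients of `γ` have upper limit at most `g` almost everywhere. The image of `I` under
`γ` is separable, so it lies in the closure of a countable set `D`. Each function `t ↦ d(γ_t, y)`
with `y ∈ D` is absolutely continuous, its derivative is almost everywhere at most `g` in absolute
value, and its difference quotients are at most those of `γ`. Let `m` be the supremum over `y ∈ D`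
of the absolute values of these derivatives. Then `m ≤ g` almost everywhere and `m` is a lower
bound for the lower limit of the difference quotients of `γ`. Integrating the derivatives and
using `d(p, q) = sup_{y ∈ D} |d(p, y) - d(q, y)|` for `p ∈ closure D` shows that `m` itself
satisfies `d(γ_s, γ_t) ≤ ∫_s^t m`, so it is an upper bound for the upper limit as well.
-/

theorem ae_restrict_mem_nhds_of_convex {E : Type*} [NormedAddCommGroup E] [NormedSpace ℝ E]
    [MeasurableSpace E] [BorelSpace E] [FiniteDimensional ℝ E] (μ : Measure E)
    [μ.IsAddHaarMeasure] {s : Set E} (hs : Convex ℝ s) : ∀ᵐ x ∂(μ.restrict s), s ∈ 𝓝 x := by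
  rw [ae_restrict_iff'₀ (hs.nullMeasurableSet μ)]
  filter_upwards [measure_eq_zero_iff_ae_notMem.1 (hs.addHaar_frontier μ)] with x hx hxs
  by_contra hmem
  exact hx ⟨subset_closure hxs, fun hint => hmem (mem_interior_iff_mem_nhds.1 hint)⟩

theorem tendsto_const_add_nhdsNE_zero {M : Type*} [TopologicalSpace M] [AddZeroClass M]
    [SeparatelyContinuousAdd M] (t : M) : Tendsto (fun h => t + h) (𝓝[≠] 0) (𝓝 t) :=
  ((continuous_const_add t).tendsto' 0 t (add_zero t)).mono_left nhdsWithin_le_nhds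

theorem tendsto_dist_div_norm_of_hasDerivAt {𝕜 E : Type*} [NontriviallyNormedField 𝕜]
    [NormedAddCommGroup E] [NormedSpace 𝕜 E] {f : 𝕜 → E} {f' : E} {t : 𝕜}
    (hf : HasDerivAt f f' t) :
    Tendsto (fun h => dist (f (t + h)) (f t) / ‖h‖) (𝓝[≠] 0) (𝓝 ‖f'‖) := by
  refine hf.tendsto_slope_zero.norm.congr fun h => ?_
  rw [norm_smul, norm_inv, dist_eq_norm, div_eq_inv_mul]

theorem ae_tendsto_inv_smul_integral {E : Type*} [NormedAddCommGroup E] [NormedSpace ℝ E]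
    [CompleteSpace E] {I : Set ℝ} (hI : I.OrdConnected) {f : ℝ → E} (hf : IntegrableOn f I) :
    ∀ᵐ t ∂(volume.restrict I),
      Tendsto (fun h => h⁻¹ • ∫ r in t..t + h, f r) (𝓝[≠] 0) (𝓝 (f t)) := by
  have hint : Integrable (I.indicator f) := hf.integrable_indicator hI.measurableSet
  filter_upwards [
    ae_restrict_of_ae (LocallyIntegrable.ae_hasDerivAt_integral hint.locallyIntegrable),
    ae_restrict_mem_nhds_of_convex volume hI.convex] with t hderiv htI
  have hslope := (hderiv t).tendsto_slope_zero
  rw [indicator_of_mem (mem_of_mem_nhds htI)] at hslope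
  refine hslope.congr' ?_
  filter_upwards [tendsto_const_add_nhdsNE_zero t htI] with h hh
  rw [intervalIntegral.integral_same, sub_zero]
  congr 1
  exact intervalIntegral.integral_congr fun r hr =>
    indicator_of_mem (hI.uIcc_subset (mem_of_mem_nhds htI) hh hr) f

theorem absolutelyContinuousOnInterval_of_dist_le {X Z : Type*} [PseudoMetricSpace X]
    [PseudoMetricSpace Z] {f : ℝ → X} {F : ℝ → Z} {a b : ℝ}
    (hF : AbsolutelyContinuousOnInterval F a b)
    (hle : ∀ s ∈ uIcc a b, ∀ t ∈ uIcc a b, dist (f s) (f t) ≤ dist (F s) (F t)) :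
    AbsolutelyContinuousOnInterval f a b := by
  rw [absolutelyContinuousOnInterval_iff] at hF ⊢
  intro ε hε
  obtain ⟨δ, hδ, h⟩ := hF ε hε
  refine ⟨δ, hδ, fun E hE hlen => (Finset.sum_le_sum fun i hi => ?_).trans_lt (h E hE hlen)⟩
  exact hle _ (hE.1 i hi).1 _ (hE.1 i hi).2

theorem dist_le_of_forall_dist_dist_le {Y : Type*} [PseudoMetricSpace Y] {D : Set Y} {p q : Y}
    {c : ℝ} (hp : p ∈ closure D) (h : ∀ y ∈ D, dist (dist p y) (dist q y) ≤ c) :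
    dist p q ≤ c := by
  have hclosed : IsClosed {y : Y | dist (dist p y) (dist q y) ≤ c} :=
    isClosed_le (by fun_prop) continuous_const
  have hpp : dist (dist p p) (dist q p) ≤ c := closure_minimal h hclosed hp
  simpa [Real.dist_eq, dist_comm] using hpp

/-- The function `g` is integrable on `I` and bounds the speed of `γ` there in the integrated sense
`d(γ_s, γ_t) ≤ ∫_s^t g`, so that `γ` is absolutely continuous on `I` if `I` is an interval. No
sign condition is imposed on `g`. -/
structure IsSpeedBoundOn {Y : Type*} [PseudoMetricSpace Y] (γ : ℝ → Y) (g : ℝ → ℝ)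
    (I : Set ℝ) : Prop where
  integrableOn : IntegrableOn g I
  dist_le_integral : ∀ s ∈ I, ∀ t ∈ I, s ≤ t → dist (γ s) (γ t) ≤ ∫ r in s..t, g r

namespace IsSpeedBoundOn

section PseudoMetricSpace

variable {Y : Type*} [PseudoMetricSpace Y] {γ : ℝ → Y} {g : ℝ → ℝ} {I : Set ℝ}

theorem lipschitz_comp {Z : Type*} [PseudoMetricSpace Z] (hγ : IsSpeedBoundOn γ g I) {f : Y → Z}
    (hf : LipschitzWith 1 f) : IsSpeedBoundOn (f ∘ γ) g I where
  integrableOn := hγ.integrableOn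
  dist_le_integral s hs t ht hst := calc
    dist (f (γ s)) (f (γ t)) ≤ dist (γ s) (γ t) := by simpa using hf.dist_le_mul (γ s) (γ t)
    _ ≤ ∫ r in s..t, g r := hγ.dist_le_integral s hs t ht hst

theorem dist_const (hγ : IsSpeedBoundOn γ g I) (y : Y) :
    IsSpeedBoundOn (fun s => dist (γ s) y) g I :=
  hγ.lipschitz_comp (LipschitzWith.dist_left y)

theorem dist_le_abs_integral (hγ : IsSpeedBoundOn γ g I) {s t : ℝ} (hs : s ∈ I) (ht : t ∈ I) :
    dist (γ s) (γ t) ≤ |∫ r in s..t, g r| := by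
  rcases le_total s t with hst | hts
  · exact (hγ.dist_le_integral s hs t ht hst).trans (le_abs_self _)
  · rw [dist_comm, intervalIntegral.integral_symm, abs_neg]
    exact (hγ.dist_le_integral t ht s hs hts).trans (le_abs_self _)

theorem dist_div_abs_le (hγ : IsSpeedBoundOn γ g I) {t h : ℝ} (ht : t ∈ I) (hth : t + h ∈ I) :
    dist (γ (t + h)) (γ t) / |h| ≤ h⁻¹ * ∫ r in t..t + h, g r := by
  rcases le_total 0 h with hh | hh
  · rw [abs_of_nonneg hh, dist_comm, div_eq_inv_mul]
    gcongr
    exact hγ.dist_le_integral t ht (t + h) hth (by linarith)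
  · rw [abs_of_nonpos hh, intervalIntegral.integral_symm, div_eq_inv_mul, mul_neg, ← neg_mul,
      ← inv_neg]
    gcongr
    · exact inv_nonneg.2 (neg_nonneg.2 hh)
    · exact hγ.dist_le_integral (t + h) hth t ht (by linarith)

theorem ae_eventually_dist_div_abs_lt (hγ : IsSpeedBoundOn γ g I) (hI : I.OrdConnected) :
    ∀ᵐ t ∂(volume.restrict I), ∀ c, g t < c →
      ∀ᶠ h in 𝓝[≠] 0, dist (γ (t + h)) (γ t) / |h| < c := by
  filter_upwards [ae_tendsto_inv_smul_integral hI hγ.integrableOn,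
    ae_restrict_mem_nhds_of_convex volume hI.convex] with t hmean htI c hc
  filter_upwards [hmean.eventually_lt_const hc, tendsto_const_add_nhdsNE_zero t htI] with h hlt hh
  exact (hγ.dist_div_abs_le (mem_of_mem_nhds htI) hh).trans_lt hlt

theorem ae_le_of_tendsto (hγ : IsSpeedBoundOn γ g I) (hI : I.OrdConnected) :
    ∀ᵐ t ∂(volume.restrict I), ∀ m,
      Tendsto (fun h => dist (γ (t + h)) (γ t) / |h|) (𝓝[≠] 0) (𝓝 m) → m ≤ g t := by
  filter_upwards [hγ.ae_eventually_dist_div_abs_lt hI] with t ht m hm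
  exact le_of_forall_gt_imp_ge_of_dense fun c hc =>
    le_of_tendsto hm ((ht c hc).mono fun _ => le_of_lt)

theorem ae_nonneg (hγ : IsSpeedBoundOn γ g I) (hI : I.OrdConnected) :
    ∀ᵐ t ∂(volume.restrict I), 0 ≤ g t := by
  filter_upwards [hγ.ae_eventually_dist_div_abs_lt hI] with t ht
  refine le_of_forall_gt_imp_ge_of_dense fun c hc => ?_
  obtain ⟨h, hh⟩ := (ht c hc).exists
  exact le_trans (by positivity) hh.le

theorem continuousOn (hγ : IsSpeedBoundOn γ g I) (hI : I.OrdConnected) : ContinuousOn γ I := by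
  intro t ht
  have hint : Integrable (I.indicator g) := hγ.integrableOn.integrable_indicator hI.measurableSet
  have hlim : Tendsto (fun s => |∫ r in t..s, I.indicator g r|) (𝓝[I] t) (𝓝 0) :=
    ((hint.continuous_primitive t).abs.tendsto' t 0 (by simp)).mono_left nhdsWithin_le_nhds
  refine tendsto_iff_dist_tendsto_zero.2 (squeeze_zero' (.of_forall fun _ => dist_nonneg) ?_ hlim)
  filter_upwards [self_mem_nhdsWithin] with s hs
  rw [intervalIntegral.integral_congr fun r hr => indicator_of_mem (hI.uIcc_subset ht hs hr) g,
    dist_comm]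
  exact hγ.dist_le_abs_integral ht hs

theorem absolutelyContinuousOnInterval (hγ : IsSpeedBoundOn γ g I) (hI : I.OrdConnected) {a b : ℝ}
    (ha : a ∈ I) (hb : b ∈ I) : AbsolutelyContinuousOnInterval γ a b := by
  have hint : ∀ {u v}, u ∈ I → v ∈ I → IntervalIntegrable g volume u v := fun hu hv =>
    (hγ.integrableOn.mono_set (hI.uIcc_subset hu hv)).intervalIntegrable
  refine absolutelyContinuousOnInterval_of_dist_le
    ((hint ha hb).absolutelyContinuousOnInterval_intervalIntegral left_mem_uIcc) fun s hs t ht => ?_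
  have hsI := hI.uIcc_subset ha hb hs
  have htI := hI.uIcc_subset ha hb ht
  rw [dist_comm (∫ r in a..s, g r), Real.dist_eq,
    intervalIntegral.integral_interval_sub_left (hint ha htI) (hint ha hsI)]
  exact hγ.dist_le_abs_integral hsI htI

end PseudoMetricSpace

section NormedSpace

variable {E : Type*} [NormedAddCommGroup E] [NormedSpace ℝ E] {γ : ℝ → E} {g : ℝ → ℝ} {I : Set ℝ}

theorem ae_differentiableAt [FiniteDimensional ℝ E] (hγ : IsSpeedBoundOn γ g I)
    (hI : I.OrdConnected) : ∀ᵐ t ∂(volume.restrict I), DifferentiableAt ℝ γ t := by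
  have hvar : LocallyBoundedVariationOn γ I := fun a b ha hb =>
    (hγ.absolutelyContinuousOnInterval hI ha hb).boundedVariationOn.mono
      (inter_subset_right.trans Icc_subset_uIcc)
  filter_upwards [hvar.ae_differentiableWithinAt hI.measurableSet,
    ae_restrict_mem_nhds_of_convex volume hI.convex] with t ht htI
  exact ht.differentiableAt htI

theorem ae_norm_deriv_le (hγ : IsSpeedBoundOn γ g I) (hI : I.OrdConnected) :
    ∀ᵐ t ∂(volume.restrict I), ‖deriv γ t‖ ≤ g t := by
  filter_upwards [hγ.ae_le_of_tendsto hI, hγ.ae_nonneg hI] with t hle h0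
  by_cases hd : DifferentiableAt ℝ γ t
  · exact hle _ (tendsto_dist_div_norm_of_hasDerivAt hd.hasDerivAt)
  · rwa [deriv_zero_of_not_differentiableAt hd, norm_zero]

end NormedSpace

end IsSpeedBoundOn

/-- The supremum over `y ∈ D` of the absolute values of the derivatives of `t ↦ d(γ_t, y)`. If `D`
is countable and `γ` is an absolutely continuous curve in the closure of `D`, then this is almost
everywhere the metric speed of `γ`. It is meaningful only where these derivatives exist and are
bounded in `y`: elsewhere `deriv` and `⨆` may take the junk value `0`. -/
noncomputable def supDerivDist {Y : Type*} [PseudoMetricSpace Y] (γ : ℝ → Y) (D : Set Y)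
    (t : ℝ) : ℝ :=
  ⨆ y : D, ‖deriv (fun s => dist (γ s) y) t‖

section SupDerivDist

variable {Y : Type*} [PseudoMetricSpace Y] {γ : ℝ → Y} {g : ℝ → ℝ} {I : Set ℝ} {D : Set Y}

theorem supDerivDist_nonneg (γ : ℝ → Y) (D : Set Y) (t : ℝ) : 0 ≤ supDerivDist γ D t :=
  Real.iSup_nonneg fun _ => norm_nonneg _

theorem measurable_supDerivDist (γ : ℝ → Y) (hD : D.Countable) :
    Measurable (supDerivDist γ D) :=
  have := hD.to_subtype
  Measurable.iSup fun _ => (measurable_deriv _).norm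

namespace IsSpeedBoundOn

theorem ae_norm_deriv_dist_le (hγ : IsSpeedBoundOn γ g I) (hI : I.OrdConnected)
    (hD : D.Countable) :
    ∀ᵐ t ∂(volume.restrict I), ∀ y : D, ‖deriv (fun s => dist (γ s) y) t‖ ≤ g t :=
  have := hD.to_subtype
  ae_all_iff.2 fun y => (hγ.dist_const y).ae_norm_deriv_le hI

theorem ae_supDerivDist_le (hγ : IsSpeedBoundOn γ g I) (hI : I.OrdConnected) (hD : D.Countable) :
    ∀ᵐ t ∂(volume.restrict I), supDerivDist γ D t ≤ g t := by
  filter_upwards [hγ.ae_norm_deriv_dist_le hI hD, hγ.ae_nonneg hI] with t hle h0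
  exact Real.iSup_le hle h0

theorem ae_norm_deriv_dist_le_supDerivDist (hγ : IsSpeedBoundOn γ g I) (hI : I.OrdConnected)
    (hD : D.Countable) :
    ∀ᵐ t ∂(volume.restrict I), ∀ y : D,
      ‖deriv (fun s => dist (γ s) y) t‖ ≤ supDerivDist γ D t := by
  filter_upwards [hγ.ae_norm_deriv_dist_le hI hD] with t ht
  exact le_ciSup ⟨g t, forall_mem_range.2 ht⟩

theorem integrableOn_supDerivDist (hγ : IsSpeedBoundOn γ g I) (hI : I.OrdConnected)
    (hD : D.Countable) : IntegrableOn (supDerivDist γ D) I := by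
  refine Integrable.mono' hγ.integrableOn (measurable_supDerivDist γ hD).aestronglyMeasurable ?_
  filter_upwards [hγ.ae_supDerivDist_le hI hD] with t ht
  rwa [Real.norm_of_nonneg (supDerivDist_nonneg γ D t)]

theorem isSpeedBoundOn_supDerivDist (hγ : IsSpeedBoundOn γ g I) (hI : I.OrdConnected)
    (hD : D.Countable) (hγD : MapsTo γ I (closure D)) :
    IsSpeedBoundOn γ (supDerivDist γ D) I where
  integrableOn := hγ.integrableOn_supDerivDist hI hD
  dist_le_integral s hs t ht hst := by
    have hsub : Ioc s t ⊆ I := Ioc_subset_Icc_self.trans (hI.out hs ht)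
    have hint : IntervalIntegrable (supDerivDist γ D) volume s t :=
      (intervalIntegrable_iff_integrableOn_Ioc_of_le hst).2
        ((hγ.integrableOn_supDerivDist hI hD).mono_set hsub)
    have hderiv : ∀ᵐ r, r ∈ Ioc s t → ∀ y : D,
        ‖deriv (fun u => dist (γ u) y) r‖ ≤ supDerivDist γ D r :=
      (ae_restrict_iff' measurableSet_Ioc).1 <| ae_restrict_of_ae_restrict_of_subset hsub
        (hγ.ae_norm_deriv_dist_le_supDerivDist hI hD)
    refine dist_le_of_forall_dist_dist_le (hγD hs) fun y hy => ?_
    calc dist (dist (γ s) y) (dist (γ t) y)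
        = ‖∫ r in s..t, deriv (fun u => dist (γ u) y) r‖ := by
          rw [((hγ.dist_const y).absolutelyContinuousOnInterval hI hs ht).integral_deriv_eq_sub,
            dist_comm, dist_eq_norm]
      _ ≤ ∫ r in s..t, supDerivDist γ D r :=
          intervalIntegral.norm_integral_le_of_norm_le hst
            (hderiv.mono fun r hr hrst => hr hrst ⟨y, hy⟩) hint

theorem ae_tendsto_supDerivDist (hγ : IsSpeedBoundOn γ g I) (hI : I.OrdConnected)
    (hD : D.Countable) (hγD : MapsTo γ I (closure D)) :
    ∀ᵐ t ∂(volume.restrict I),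
      Tendsto (fun h => dist (γ (t + h)) (γ t) / |h|) (𝓝[≠] 0) (𝓝 (supDerivDist γ D t)) := by
  have := hD.to_subtype
  have hdiff : ∀ᵐ t ∂(volume.restrict I), ∀ y : D,
      DifferentiableAt ℝ (fun s => dist (γ s) y) t :=
    ae_all_iff.2 fun y => (hγ.dist_const y).ae_differentiableAt hI
  filter_upwards [hdiff, ae_restrict_mem hI.measurableSet,
    (hγ.isSpeedBoundOn_supDerivDist hI hD hγD).ae_eventually_dist_div_abs_lt hI]
    with t hdiff htI hupper
  refine tendsto_order.2 ⟨fun c hc => ?_, hupper⟩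
  have : Nonempty D := (closure_nonempty_iff.1 ⟨γ t, hγD htI⟩).to_subtype
  obtain ⟨y, hy⟩ := exists_lt_of_lt_ciSup hc
  filter_upwards [(tendsto_dist_div_norm_of_hasDerivAt
    (hdiff y).hasDerivAt).eventually_const_lt hy] with h hh
  calc c < dist (dist (γ (t + h)) y) (dist (γ t) y) / |h| := hh
    _ ≤ dist (γ (t + h)) (γ t) / |h| := by gcongr; exact dist_dist_dist_le_left _ _ _

end IsSpeedBoundOn

end SupDerivDist

theorem metric_speed_exists_general {Y : Type*} [PseudoMetricSpace Y] {I : Set ℝ}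
    (hI : I.OrdConnected) {γ : ℝ → Y} (hγ : ∃ g, IsSpeedBoundOn γ g I) :
    ∃ ms : ℝ → ℝ, (∀ t, 0 ≤ ms t) ∧
      (∀ᵐ t ∂(volume.restrict I),
        Tendsto (fun h => dist (γ (t + h)) (γ t) / |h|) (𝓝[≠] 0) (𝓝 (ms t))) ∧
      IsSpeedBoundOn γ ms I ∧
      ∀ g, IsSpeedBoundOn γ g I → ∀ᵐ t ∂(volume.restrict I), ms t ≤ g t := by
  obtain ⟨g, hg⟩ := hγ
  obtain ⟨D, hD, hID⟩ : TopologicalSpace.IsSeparable (γ '' I) :=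
    (hg.continuousOn hI).isSeparable_image (.of_separableSpace I)
  have hγD : MapsTo γ I (closure D) := mapsTo_iff_image_subset.2 hID
  exact ⟨supDerivDist γ D, supDerivDist_nonneg γ D, hg.ae_tendsto_supDerivDist hI hD hγD,
    hg.isSpeedBoundOn_supDerivDist hI hD hγD, fun _ hg' => hg'.ae_supDerivDist_le hI hD⟩

/-- **Existence and minimality of the metric speed** of an absolutely continuous curve on
an interval `I ⊆ ℝ`: for a.e. `t ∈ I` the limit `|γ̇_t| = lim_{h→0} d(γ_{t+h}, γ_t)/|h|`
exists, is integrable on `I`, controls the distance, and is a.e. minimal among all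
admissible integrable densities. -/
theorem metric_speed_exists {Y : Type*} [MetricSpace Y] (I : Set ℝ)
    (hI : I.OrdConnected) (γ : ℝ → Y) (hγ : AbsContOnSet γ I) :
    ∃ ms : ℝ → ℝ, (∀ t, 0 ≤ ms t) ∧
      (∀ᵐ t ∂(MeasureTheory.volume.restrict I),
        Filter.Tendsto (fun h => dist (γ (t + h)) (γ t) / |h|)
          (nhdsWithin 0 {h : ℝ | h ≠ 0 ∧ t + h ∈ I}) (nhds (ms t))) ∧
      MeasureTheory.IntegrableOn ms I ∧
      (∀ s ∈ I, ∀ t ∈ I, s ≤ t → dist (γ s) (γ t) ≤ ∫ r in s..t, ms r) ∧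
      (∀ g : ℝ → ℝ, (∀ t, 0 ≤ g t) → MeasureTheory.IntegrableOn g I →
        (∀ s ∈ I, ∀ t ∈ I, s ≤ t → dist (γ s) (γ t) ≤ ∫ r in s..t, g r) →
        ∀ᵐ t ∂(MeasureTheory.volume.restrict I), ms t ≤ g t) := by
  obtain ⟨g₀, -, hg₀, hle₀⟩ := hγ
  obtain ⟨ms, hms0, hlim, hms, hmin⟩ := metric_speed_exists_general hI ⟨g₀, hg₀, hle₀⟩
  exact ⟨ms, hms0, hlim.mono fun t ht => ht.mono_left (nhdsWithin_mono 0 fun _ hh => hh.1),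
    hms.integrableOn, hms.dist_le_integral, fun g _ hg hle => hmin g ⟨hg, hle⟩⟩
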